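/- Let α < 1, β > 0, c > 0, τ_θ > 0 and, for τ < β/√c, set ψ_c(τ) = (β/√c - τ)/(1-α) and I_c(τ) = (1/2)·log((τ + ψ_c(τ))/τ_θ). Then I_c'(τ) = -α/(2(1-α)(τ + ψ_c(τ))). Hence I_c is strictly increasing if α < 0, strictly decreasing if 0 < α < 1, and constant if α = 0. -/

import Mathlib

/-!
Equilibrium reactions make the posterior precision `τ + ψ(τ) = (b - ατ) / (1 - α)`, with
`b = β / √c`, affine in the public precision `τ` with slope `-(α / (1 - α))`. Mutual information is
half the logarithm of posterior over prior precision, so it moves with `τ` in the direction given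
by the sign of this slope.
-/

open Set

/-- The mutual information between a Gaussian state of prior precision `τθ` and Gaussian signals
that raise the precision of the posterior to `u`. -/
noncomputable def gaussianMutualInfo (τθ u : ℝ) : ℝ :=
  1 / 2 * Real.log (u / τθ)

/-- The posterior precision `τ + ψ(τ)` at public precision `τ`, where `ψ(τ) = (b - τ) / (1 - α)` is
the equilibrium precision of private information. The cost enters only through `b`, which stands
for `β / √c`. -/
noncomputable def posteriorPrecision (α b τ : ℝ) : ℝ :=
  τ + (b - τ) / (1 - α)

section GaussianMutualInfo

variable {τθ u : ℝ}

lemma hasDerivAt_gaussianMutualInfo (hτθ : τθ ≠ 0) (hu : u ≠ 0) :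
    HasDerivAt (gaussianMutualInfo τθ) (1 / (2 * u)) u := by
  have hlog := (((hasDerivAt_id' u).div_const τθ).log (div_ne_zero hu hτθ)).const_mul (1 / 2)
  exact hlog.congr_deriv (by field_simp)

lemma strictMonoOn_gaussianMutualInfo (hτθ : 0 < τθ) :
    StrictMonoOn (gaussianMutualInfo τθ) (Ioi 0) := fun _ hu _ _ huv =>
  mul_lt_mul_of_pos_left
    (Real.log_lt_log (div_pos hu hτθ) (div_lt_div_of_pos_right huv hτθ)) one_half_pos

end GaussianMutualInfo

section PosteriorPrecision

variable {α b τ : ℝ}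

lemma posteriorPrecision_eq_div (hα : α ≠ 1) :
    posteriorPrecision α b τ = (b - α * τ) / (1 - α) := by
  have hα' : 1 - α ≠ 0 := sub_ne_zero.2 hα.symm
  rw [posteriorPrecision]
  field_simp
  ring

lemma posteriorPrecision_pos (hα : α < 1) (hτ : τ ∈ Ico 0 b) :
    0 < posteriorPrecision α b τ :=
  add_pos_of_nonneg_of_pos hτ.1 (div_pos (sub_pos.2 hτ.2) (sub_pos.2 hα))

lemma hasDerivAt_posteriorPrecision (hα : α ≠ 1) :
    HasDerivAt (posteriorPrecision α b) (-(α / (1 - α))) τ := by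
  have haffine : posteriorPrecision α b = fun σ => (b - α * σ) / (1 - α) :=
    funext fun _ => posteriorPrecision_eq_div hα
  rw [haffine]
  exact ((((hasDerivAt_id' τ).const_mul α).const_sub b).div_const (1 - α)).congr_deriv (by ring)

lemma ne_one_of_div_one_sub_ne_zero (h : α / (1 - α) ≠ 0) : α ≠ 1 := by
  rintro rfl
  simp at h

lemma strictMono_posteriorPrecision (h : α / (1 - α) < 0) : StrictMono (posteriorPrecision α b) :=
  strictMono_of_hasDerivAt_pos
    (fun _ => hasDerivAt_posteriorPrecision (ne_one_of_div_one_sub_ne_zero h.ne))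
    fun _ => neg_pos.2 h

lemma strictAnti_posteriorPrecision (h : 0 < α / (1 - α)) : StrictAnti (posteriorPrecision α b) :=
  strictAnti_of_hasDerivAt_neg
    (fun _ => hasDerivAt_posteriorPrecision (ne_one_of_div_one_sub_ne_zero h.ne'))
    fun _ => neg_neg_iff_pos.2 h

end PosteriorPrecision

theorem stmt_17_general {α b τθ : ℝ} (hα : α ≠ 1) (hτθ : 0 < τθ) :
    let I : ℝ → ℝ := fun τ => gaussianMutualInfo τθ (posteriorPrecision α b τ)
    let D : Set ℝ := {τ | 0 < posteriorPrecision α b τ}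
    (∀ τ ∈ D, HasDerivAt I (-α / (2 * (1 - α) * posteriorPrecision α b τ)) τ) ∧
    (α / (1 - α) < 0 → StrictMonoOn I D) ∧
    (0 < α / (1 - α) → StrictAntiOn I D) ∧
    (α = 0 → ∀ τ₁ τ₂, I τ₁ = I τ₂) := by
  intro I D
  have hinfo : StrictMonoOn (gaussianMutualInfo τθ) (Ioi 0) := strictMonoOn_gaussianMutualInfo hτθ
  refine ⟨fun τ hτ => ?_, fun h => ?_, fun h => ?_, ?_⟩
  · have hchain := (hasDerivAt_gaussianMutualInfo hτθ.ne' (ne_of_gt hτ)).comp τ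
      (hasDerivAt_posteriorPrecision hα)
    have hα' : 1 - α ≠ 0 := sub_ne_zero.2 hα.symm
    exact hchain.congr_deriv (by field_simp)
  · exact hinfo.comp ((strictMono_posteriorPrecision h).strictMonoOn D) fun _ hτ => hτ
  · exact hinfo.comp_strictAntiOn ((strictAnti_posteriorPrecision h).strictAntiOn D) fun _ hτ => hτ
  · rintro rfl τ₁ τ₂
    simp only [I, posteriorPrecision_eq_div hα, zero_mul]

theorem stmt_17 (α β c τθ : ℝ) (hα : α < 1) (hβ : 0 < β) (hc : 0 < c) (hτθ : 0 < τθ) :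
    let ψ : ℝ → ℝ := fun τ => (β/Real.sqrt c - τ)/(1-α)
    let I : ℝ → ℝ := fun τ => (1/2)*Real.log ((τ + ψ τ)/τθ)
    (∀ τ ∈ Set.Ico (0:ℝ) (β/Real.sqrt c),
      HasDerivAt I (-α/(2*(1-α)*(τ + ψ τ))) τ) ∧
    (α < 0 → StrictMonoOn I (Set.Ico 0 (β/Real.sqrt c))) ∧
    (0 < α → StrictAntiOn I (Set.Ico 0 (β/Real.sqrt c))) ∧
    (α = 0 → ∀ τ₁ ∈ Set.Ico (0:ℝ) (β/Real.sqrt c), ∀ τ₂ ∈ Set.Ico (0:ℝ) (β/Real.sqrt c),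
      I τ₁ = I τ₂) := by
  obtain ⟨hderiv, hmono, hanti, hconst⟩ := stmt_17_general (b := β / Real.sqrt c) hα.ne hτθ
  have hpos := fun τ => posteriorPrecision_pos (b := β / Real.sqrt c) (τ := τ) hα
  exact ⟨fun τ hτ => hderiv τ (hpos τ hτ),
    fun h => (hmono (div_neg_of_neg_of_pos h (sub_pos.2 hα))).mono hpos,
    fun h => (hanti (div_pos h (sub_pos.2 hα))).mono hpos, fun h τ₁ _ τ₂ _ => hconst h τ₁ τ₂⟩
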